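/- Let E be a real Hilbert space, c ≥ 1, 1 < p ≤ 2 with conjugate exponent p* = p/(p−1), and let u = (u_1,…,u_c) ∈ E^c with u ≠ 0. Define w = (w_1,…,w_c) ∈ E^c by w_j = (Σ_{j̃=1}^c ‖u_{j̃}‖^{p*})^{(2/p*)−1} · ‖u_j‖^{p*−2} · u_j (with the convention that ‖u_j‖^{p*−2} u_j = 0 when u_j = 0). Then w is a maximizer over E^c of the concave function v ↦ Σ_{j=1}^c ⟨v_j, u_j⟩ − (1/2)‖v‖_{2,p}², and the maximum value equals (1/2)‖u‖_{2,p*}²; i.e., the Fenchel conjugate of (1/2)‖·‖_{2,p}² evaluated at u equals (1/2)‖u‖_{2,p*}² and is attained at w. -/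

import Mathlib

open RealInnerProductSpace

/-- The `ℓ_{2,p}` block norm `‖w‖_{2,p} = (Σ_j ‖w_j‖^p)^{1/p}` on `E^c`. -/
noncomputable def norm2p {E : Type*} [NormedAddCommGroup E] {c : ℕ}
    (p : ℝ) (w : Fin c → E) : ℝ :=
  (∑ j, ‖w j‖ ^ p) ^ (1 / p)

/-- The candidate maximizer of the representer theorem:
`w_j = (Σ_{j̃} ‖u_{j̃}‖^{p*})^{2/p* - 1} ‖u_j‖^{p*-2} u_j` with `p* = p/(p-1)`. -/
noncomputable def reprW {E : Type*} [NormedAddCommGroup E] [InnerProductSpace ℝ E] {c : ℕ}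
    (p : ℝ) (u : Fin c → E) : Fin c → E :=
  fun j =>
    ((∑ j' : Fin c, ‖u j'‖ ^ (p / (p - 1))) ^ (2 / (p / (p - 1)) - 1) *
      ‖u j‖ ^ (p / (p - 1) - 2)) • u j

/-- **Representer theorem** (Theorem 4): `w = reprW p u` maximizes
`v ↦ Σ_j ⟪v_j, u_j⟫ - (1/2)‖v‖_{2,p}²` over `E^c`, and the maximum value is
`(1/2)‖u‖_{2,p*}²`, i.e. the Fenchel conjugate of `(1/2)‖·‖_{2,p}²` at `u` equals
`(1/2)‖u‖_{2,p*}²` and is attained at `w`. -/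
theorem representer_theorem_lp {E : Type*} [NormedAddCommGroup E] [InnerProductSpace ℝ E]
    (c : ℕ) (hc : 1 ≤ c) (p : ℝ) (hp₁ : 1 < p) (hp₂ : p ≤ 2)
    (u : Fin c → E) (hu : u ≠ 0) :
    (∀ v : Fin c → E,
      (∑ j, ⟪v j, u j⟫) - (1 / 2) * (norm2p p v) ^ 2 ≤
        (∑ j, ⟪reprW p u j, u j⟫) - (1 / 2) * (norm2p p (reprW p u)) ^ 2) ∧
    (∑ j, ⟪reprW p u j, u j⟫) - (1 / 2) * (norm2p p (reprW p u)) ^ 2 =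
      (1 / 2) * (norm2p (p / (p - 1)) u) ^ 2 := by
  have hp0 : 0 < p := by linarith
  have hpm : p - 1 ≠ 0 := by linarith
  have hpq : p.HolderConjugate (p / (p - 1)) := Real.HolderConjugate.conjExponent hp₁
  have hqv : p / (p - 1) - 1 = (p / (p - 1)) / p := by field_simp; ring
  have hinv : (p / (p - 1))⁻¹ + p⁻¹ = 1 := by
    have := hpq.inv_add_inv_eq_one
    linarith
  have hq1 : 1 < p / (p - 1) := hpq.symm.lt
  have hw : reprW p u = fun j =>
    ((∑ j' : Fin c, ‖u j'‖ ^ (p / (p - 1))) ^ (2 / (p / (p - 1)) - 1) *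
      ‖u j‖ ^ (p / (p - 1) - 2)) • u j := rfl
  generalize p / (p - 1) = q at *
  have hq0 : 0 < q := by linarith
  obtain ⟨j₀, hj₀⟩ := Function.ne_iff.mp hu
  have hS : 0 < ∑ j, ‖u j‖ ^ q := by
    refine Finset.sum_pos' (fun j _ => by positivity) ⟨j₀, Finset.mem_univ _, ?_⟩
    exact Real.rpow_pos_of_pos (norm_pos_iff.mpr hj₀) _
  have hnu : norm2p q u = (∑ j, ‖u j‖ ^ q) ^ (1 / q) := rfl
  have hsq : (norm2p q u) ^ 2 = (∑ j, ‖u j‖ ^ q) ^ (2 / q) := by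
    rw [hnu, ← Real.rpow_natCast, ← Real.rpow_mul hS.le]
    congr 1
    push_cast
    ring
  have hinner : ∑ j, ⟪reprW p u j, u j⟫ = (norm2p q u) ^ 2 := by
    have h1 : ∀ j, ⟪reprW p u j, u j⟫ =
        (∑ j, ‖u j‖ ^ q) ^ (2 / q - 1) * ‖u j‖ ^ q := by
      intro j
      rw [hw]
      simp only [real_inner_smul_left, real_inner_self_eq_norm_sq]
      rcases eq_or_lt_of_le (norm_nonneg (u j)) with h | h
      · rw [← h, Real.zero_rpow hq0.ne']; simp
      · rw [mul_assoc, ← Real.rpow_natCast, ← Real.rpow_add h]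
        congr 2
        push_cast
        ring
    rw [Finset.sum_congr rfl (fun j _ => h1 j), ← Finset.mul_sum, hsq]
    nth_rewrite 2 [← Real.rpow_one (∑ j, ‖u j‖ ^ q)]
    rw [← Real.rpow_add hS]
    congr 1
    ring
  have hnorm : norm2p p (reprW p u) = norm2p q u := by
    have h1 : ∀ j, ‖reprW p u j‖ ^ p =
        (∑ j, ‖u j‖ ^ q) ^ ((2 / q - 1) * p) * ‖u j‖ ^ q := by
      intro j
      rw [hw]
      simp only [norm_smul, norm_mul]
      rw [Real.norm_of_nonneg (Real.rpow_nonneg hS.le _),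
        Real.norm_of_nonneg (Real.rpow_nonneg (norm_nonneg _) _)]
      rcases eq_or_lt_of_le (norm_nonneg (u j)) with h | h
      · rw [← h, Real.zero_rpow hq0.ne', mul_zero, Real.zero_rpow hp0.ne', mul_zero]
      · have h2 : ‖u j‖ ^ (q - 2) * ‖u j‖ = ‖u j‖ ^ (q / p) := by
          nth_rewrite 2 [← Real.rpow_one ‖u j‖]
          rw [← Real.rpow_add h, ← hqv]
          congr 1
          ring
        rw [mul_assoc, h2, Real.mul_rpow (Real.rpow_nonneg hS.le _) (Real.rpow_nonneg h.le _),
          ← Real.rpow_mul hS.le, ← Real.rpow_mul h.le, div_mul_cancel₀ _ hp0.ne']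
    unfold norm2p
    rw [Finset.sum_congr rfl (fun j _ => h1 j), ← Finset.mul_sum]
    nth_rewrite 2 [← Real.rpow_one (∑ j, ‖u j‖ ^ q)]
    rw [← Real.rpow_add hS, ← Real.rpow_mul hS.le]
    congr 1
    have : ((2 / q - 1) * p + 1) * (1 / p) = 2 * q⁻¹ - 1 + p⁻¹ := by
      field_simp
    rw [this, one_div]
    linarith
  have hval : (∑ j, ⟪reprW p u j, u j⟫) - (1 / 2) * (norm2p p (reprW p u)) ^ 2 =
      (1 / 2) * (norm2p q u) ^ 2 := by
    rw [hinner, hnorm]; ring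
  refine ⟨fun v => ?_, hval⟩
  rw [hval]
  have h1 : ∑ j, ⟪v j, u j⟫ ≤ norm2p p v * norm2p q u :=
    (Finset.sum_le_sum fun j _ => real_inner_le_norm (v j) (u j)).trans
      (Real.inner_le_Lp_mul_Lq_of_nonneg Finset.univ hpq (fun _ _ => norm_nonneg _)
        (fun _ _ => norm_nonneg _))
  nlinarith [sq_nonneg (norm2p p v - norm2p q u)]
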